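/- For every polynomial Q with complex coefficients, the series Σ_{n=0}^∞ |Q(n)| |j_n(z)|² converges for every z ∈ ℂ, and the convergence is uniform on every compact subset of ℂ. -/

import Mathlib

open MeasureTheory

/-- The spherical Bessel function of the first kind of order `n`, defined for `z ∈ ℂ` by
`j_n(z) = z^n Σ_{k=0}^∞ (-z²/2)^k / (k! (2n+2k+1)!!)`. -/
noncomputable def sphBessel (n : ℕ) (z : ℂ) : ℂ :=
  z ^ n * ∑' k : ℕ,
    (-z ^ 2 / 2) ^ k / ((k.factorial : ℂ) * ((2 * n + 2 * k + 1).doubleFactorial : ℂ))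

lemma aux_fact_le (n k : ℕ) : n.factorial ≤ (2 * n + 2 * k + 1).doubleFactorial := by
  induction n with
  | zero => exact Nat.doubleFactorial_pos _
  | succ n ih =>
    have h : 2 * (n + 1) + 2 * k + 1 = (2 * n + 2 * k + 1) + 2 := by ring
    rw [h, Nat.doubleFactorial_add_two, Nat.factorial_succ]
    exact Nat.mul_le_mul (by omega) ih

lemma aux_bessel (n : ℕ) (z : ℂ) (R : ℝ) (hz : ‖z‖ ≤ R) :
    ‖sphBessel n z‖ ≤ R ^ n / n.factorial * Real.exp (R ^ 2 / 2) := by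
  have hR : 0 ≤ R := (norm_nonneg z).trans hz
  have hs : HasSum (fun k : ℕ => (R ^ 2 / 2) ^ k / (k.factorial : ℝ) / (n.factorial : ℝ))
      (Real.exp (R ^ 2 / 2) / n.factorial) := by
    rw [Real.exp_eq_exp_ℝ]
    exact (NormedSpace.expSeries_div_hasSum_exp (R ^ 2 / 2)).div_const _
  have hb : ‖∑' k : ℕ, (-z ^ 2 / 2) ^ k /
      ((k.factorial : ℂ) * ((2 * n + 2 * k + 1).doubleFactorial : ℂ))‖
      ≤ Real.exp (R ^ 2 / 2) / n.factorial := by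
    apply tsum_of_norm_bounded hs
    intro k
    have h1 : (n.factorial : ℝ) ≤ ((2 * n + 2 * k + 1).doubleFactorial : ℝ) := by
      exact_mod_cast aux_fact_le n k
    have h2 : (0 : ℝ) < n.factorial := by exact_mod_cast n.factorial_pos
    have h3 : (0 : ℝ) < k.factorial := by exact_mod_cast k.factorial_pos
    simp only [norm_div, norm_pow, norm_neg, norm_mul, Complex.norm_natCast, Complex.norm_ofNat]
    rw [div_div]
    gcongr
  unfold sphBessel
  rw [norm_mul, norm_pow]
  calc _ ≤ R ^ n * (Real.exp (R ^ 2 / 2) / n.factorial) := by gcongr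
    _ = _ := by ring

lemma aux_poly (Q : Polynomial ℂ) :
    ∃ C : ℝ, 0 ≤ C ∧ ∀ n : ℕ, ‖Q.eval (n : ℂ)‖ ≤ C * Real.exp 1 ^ n := by
  refine ⟨∑ i ∈ Finset.range (Q.natDegree + 1), ‖Q.coeff i‖ * i.factorial, by positivity, ?_⟩
  intro n
  rw [Polynomial.eval_eq_sum_range, Finset.sum_mul]
  refine (norm_sum_le _ _).trans (Finset.sum_le_sum fun i _ => ?_)
  rw [norm_mul, norm_pow, Complex.norm_natCast, mul_assoc]
  have h := Real.pow_div_factorial_le_exp (n : ℝ) (by positivity) i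
  rw [div_le_iff₀ (by positivity)] at h
  rw [← Real.exp_nat_mul, mul_one, mul_comm (i.factorial : ℝ)]
  gcongr

lemma aux_main (Q : Polynomial ℂ) (R : ℝ) : ∃ u : ℕ → ℝ, Summable u ∧
    ∀ (n : ℕ) (z : ℂ), ‖z‖ ≤ R → ‖Q.eval (n : ℂ)‖ * ‖sphBessel n z‖ ^ 2 ≤ u n := by
  obtain ⟨C, hC, hQ⟩ := aux_poly Q
  refine ⟨fun n => (C * Real.exp (R ^ 2 / 2) ^ 2) *
    ((Real.exp 1 * R ^ 2) ^ n / n.factorial), (Real.summable_pow_div_factorial _).mul_left _, ?_⟩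
  intro n z hz
  have hR : 0 ≤ R := (norm_nonneg z).trans hz
  have h1 : (1 : ℝ) ≤ n.factorial := by exact_mod_cast n.factorial_pos
  calc _ ≤ (C * Real.exp 1 ^ n) * (R ^ n / n.factorial * Real.exp (R ^ 2 / 2)) ^ 2 := by
        gcongr
        · exact hQ n
        · exact aux_bessel n z R hz
    _ = (C * Real.exp (R ^ 2 / 2) ^ 2) * ((Real.exp 1 * R ^ 2) ^ n / (n.factorial : ℝ) ^ 2) := by
        rw [mul_pow, mul_pow, div_pow, ← pow_mul, ← pow_mul, mul_comm n 2]; ring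
    _ ≤ _ := by
        beta_reduce
        gcongr
        exact le_self_pow₀ h1 two_ne_zero

/-- For every polynomial `Q` with complex coefficients, the series
`Σ_{n=0}^∞ |Q(n)| |j_n(z)|²` converges for every `z ∈ ℂ`, uniformly on every compact
subset of `ℂ`. -/
theorem stmt_4 (Q : Polynomial ℂ) :
    (∀ z : ℂ, Summable fun n : ℕ => ‖Q.eval (n : ℂ)‖ * ‖sphBessel n z‖ ^ 2) ∧
    (∀ K : Set ℂ, IsCompact K →
      TendstoUniformlyOn
        (fun N z => ∑ n ∈ Finset.range N, ‖Q.eval (n : ℂ)‖ * ‖sphBessel n z‖ ^ 2)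
        (fun z => ∑' n : ℕ, ‖Q.eval (n : ℂ)‖ * ‖sphBessel n z‖ ^ 2)
        Filter.atTop K) := by
  constructor
  · intro z
    obtain ⟨u, hu, h⟩ := aux_main Q ‖z‖
    exact Summable.of_nonneg_of_le (fun n => by positivity) (fun n => h n z le_rfl) hu
  · intro K hK
    obtain ⟨R, hR⟩ := hK.isBounded.exists_norm_le
    obtain ⟨u, hu, h⟩ := aux_main Q R
    refine tendstoUniformlyOn_tsum_nat hu fun n z hz => ?_
    rw [Real.norm_of_nonneg (by positivity)]
    exact h n z (hR z hz)
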